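/- Let F be a Ferrers diagram of semiperimeter n+1. For c ∈ Rec_min(G(F)), define the filling φ_CT(c) of F by putting, in each cell (i,j) of F (i ∈ rows(F), j ∈ cols(F)), the entry 1 if i lies in an earlier block than j in CanonTop(c), and 0 if j lies in an earlier block than i. Then φ_CT(c) is a EW-tableau on F, and the maps φ_CT : Rec_min(G(F)) → EWtab(F) and φ_TC : EWtab(F) → Rec_min(G(F)) are mutually inverse bijections. -/

import Mathlib

open Classical

/-- A Ferrers diagram of semiperimeter `n + 1`, encoded by the set of its row labels
(labels `0, …, n` run along the south-east border; `0` labels the top row and the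
last label `n` is a column label). -/
structure Ferrers (n : ℕ) where
  rows : Finset (Fin (n + 1))
  zero_mem : 0 ∈ rows
  last_not_mem : Fin.last n ∉ rows

namespace Ferrers

/-- `(i, j)` is a cell of the diagram: `i` is a row label, `j` a column label, `i < j`. -/
def Cell {n : ℕ} (F : Ferrers n) (i j : Fin (n + 1)) : Prop :=
  i ∈ F.rows ∧ j ∉ F.rows ∧ i < j

/-- Adjacency in the Ferrers graph `G(F)`. -/
def Adj {n : ℕ} (F : Ferrers n) (u v : Fin (n + 1)) : Prop :=
  F.Cell u v ∨ F.Cell v u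

/-- Degree of a vertex in `G(F)`. -/
noncomputable def deg {n : ℕ} (F : Ferrers n) (v : Fin (n + 1)) : ℕ :=
  {u | F.Adj v u}.ncard

/-- Toppling a single vertex.  The height at the sink `0` is kept equal to `c 0`
(grains sent to the sink vanish); toppling the sink sends one grain to each of
its neighbours. -/
noncomputable def topple {n : ℕ} (F : Ferrers n) (c : Fin (n + 1) → ℕ)
    (v : Fin (n + 1)) : Fin (n + 1) → ℕ :=
  fun u =>
    if u = 0 then c 0
    else if u = v then c v - F.deg v
    else if F.Adj v u then c u + 1
    else c u

/-- Toppling the vertices of a list in order. -/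
noncomputable def toppleList {n : ℕ} (F : Ferrers n) (c : Fin (n + 1) → ℕ)
    (l : List (Fin (n + 1))) : Fin (n + 1) → ℕ :=
  l.foldl F.topple c

/-- Simultaneous toppling of a set of vertices. -/
noncomputable def toppleSet {n : ℕ} (F : Ferrers n) (c : Fin (n + 1) → ℕ)
    (S : Set (Fin (n + 1))) : Fin (n + 1) → ℕ :=
  fun u =>
    if u = 0 then c 0
    else c u + {w ∈ S | F.Adj w u}.ncard - if u ∈ S then F.deg u else 0

/-- A configuration is stable if every non-sink vertex has fewer grains than its degree. -/
def Stable {n : ℕ} (F : Ferrers n) (c : Fin (n + 1) → ℕ) : Prop :=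
  ∀ v, v ≠ 0 → c v < F.deg v

/-- A Dhar (burning) ordering for `c`: an ordering `v₀ = 0, v₁, …, vₙ` of all the
vertices such that each `vᵢ` (`i ≥ 1`) is unstable after toppling `v₀, …, v_{i-1}`. -/
def DharSeq {n : ℕ} (F : Ferrers n) (c : Fin (n + 1) → ℕ) (l : List (Fin (n + 1))) : Prop :=
  l.length = n + 1 ∧ l.Nodup ∧ l.head? = some 0 ∧
    ∀ i, ∀ h : i < l.length, 1 ≤ i →
      F.deg (l.get ⟨i, h⟩) ≤ F.toppleList c (l.take i) (l.get ⟨i, h⟩)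

/-- Recurrent configurations (via Dhar's criterion).  The height at the sink is
normalised to `0`. -/
def Recurrent {n : ℕ} (F : Ferrers n) (c : Fin (n + 1) → ℕ) : Prop :=
  c 0 = 0 ∧ F.Stable c ∧ ∃ l, F.DharSeq c l

/-- Minimal recurrent configurations: recurrent with minimal total number of grains. -/
def RecMin {n : ℕ} (F : Ferrers n) (c : Fin (n + 1) → ℕ) : Prop :=
  F.Recurrent c ∧ ∀ c', F.Recurrent c' → (∑ v, c v) ≤ ∑ v, c' v

/-- Canonical toppling: block `0` is `{0}` (the sink); from then on, blocks with odd
index are the sets of currently unstable column vertices and blocks with even index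
the sets of currently unstable row vertices.  The first component is the configuration
just before toppling the block recorded in the second component. -/
noncomputable def canonAux {n : ℕ} (F : Ferrers n) (c : Fin (n + 1) → ℕ) :
    ℕ → ((Fin (n + 1) → ℕ) × Set (Fin (n + 1)))
  | 0 => (c, {0})
  | k + 1 =>
    let c' := F.toppleSet (canonAux F c k).1 (canonAux F c k).2
    (c', {v | v ≠ 0 ∧ (if k % 2 = 0 then v ∉ F.rows else v ∈ F.rows) ∧ F.deg v ≤ c' v})

/-- The `k`-th block of the canonical toppling of `c`:
`canonTop F c 0 = U⁰ = {0}`, `canonTop F c (2i-1) = Vⁱ`, `canonTop F c (2i) = Uⁱ`. -/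
noncomputable def canonTop {n : ℕ} (F : Ferrers n) (c : Fin (n + 1) → ℕ) (k : ℕ) :
    Set (Fin (n + 1)) :=
  (F.canonAux c k).2

/-- The configuration just before toppling the `k`-th block of the canonical toppling. -/
noncomputable def canonConfig {n : ℕ} (F : Ferrers n) (c : Fin (n + 1) → ℕ) (k : ℕ) :
    Fin (n + 1) → ℕ :=
  (F.canonAux c k).1

/-- The index of the block of the canonical toppling of `c` containing `v`. -/
noncomputable def bIdx {n : ℕ} (F : Ferrers n) (c : Fin (n + 1) → ℕ) (v : Fin (n + 1)) : ℕ :=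
  sInf {k | v ∈ F.canonTop c k}

/-- `T` is a EW-tableau on `F` (entries of non-cells are normalised to `false`):
the top row contains only `1`s, every other row contains a `0`, and there is no
rectangle with two diagonally opposite `0`s and two `1`s in the other corners. -/
def IsEW {n : ℕ} (F : Ferrers n) (T : Fin (n + 1) → Fin (n + 1) → Bool) : Prop :=
  (∀ i j, ¬F.Cell i j → T i j = false) ∧
  (∀ j, F.Cell 0 j → T 0 j = true) ∧
  (∀ i, i ∈ F.rows → i ≠ 0 → ∃ j, F.Cell i j ∧ T i j = false) ∧
  (∀ i i' j j', F.Cell i j → F.Cell i j' → F.Cell i' j → F.Cell i' j' →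
    T i j = T i' j' → T i j' = T i' j → T i j = T i j')

/-- The configuration associated to a tableau: row vertices count the `1`s in their
row, column vertices count the `0`s in their column (the sink is normalised to `0`). -/
noncomputable def phiTC {n : ℕ} (F : Ferrers n) (T : Fin (n + 1) → Fin (n + 1) → Bool) :
    Fin (n + 1) → ℕ :=
  fun v =>
    if v = 0 then 0
    else if v ∈ F.rows then {j | F.Cell v j ∧ T v j = true}.ncard
    else {i | F.Cell i v ∧ T i v = false}.ncard

/-- The tableau associated to a (minimal recurrent) configuration: a cell `(i, j)`
gets a `1` exactly when `i` lies in an earlier block than `j` in the canonical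
toppling of `c`. -/
noncomputable def phiCT {n : ℕ} (F : Ferrers n) (c : Fin (n + 1) → ℕ) :
    Fin (n + 1) → Fin (n + 1) → Bool :=
  fun i j => if F.Cell i j ∧ F.bIdx c i < F.bIdx c j then true else false

/-- The supplementary tableau of `T`: `S i j = 1` exactly when the row vertex `i`
lies in an earlier block than the column vertex `j` in `CanonTop (φ_TC T)`. -/
noncomputable def suppS {n : ℕ} (F : Ferrers n) (T : Fin (n + 1) → Fin (n + 1) → Bool)
    (i j : Fin (n + 1)) : Bool :=
  if F.bIdx (F.phiTC T) i < F.bIdx (F.phiTC T) j then true else false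

/-- The entry of `T` in cell `(j, k)` is a cornersupport entry. -/
def Cornersupport {n : ℕ} (F : Ferrers n) (T : Fin (n + 1) → Fin (n + 1) → Bool)
    (j k : Fin (n + 1)) : Prop :=
  ∃ j' k', j' ∈ F.rows ∧ k' ∉ F.rows ∧ j' ≠ j ∧ k' ≠ k ∧
    F.suppS T j' k' = !(T j k) ∧ F.suppS T j' k = T j k ∧ F.suppS T j k' = T j k

/-- `ν_v(T)`: the number of non-cornersupport `0`s in row `v` (if `v` is a row label),
resp. non-cornersupport `1`s in column `v` (if `v` is a column label). -/
noncomputable def nu {n : ℕ} (F : Ferrers n) (T : Fin (n + 1) → Fin (n + 1) → Bool)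
    (v : Fin (n + 1)) : ℕ :=
  if v ∈ F.rows then {k | F.Cell v k ∧ T v k = false ∧ ¬F.Cornersupport T v k}.ncard
  else {i | F.Cell i v ∧ T i v = true ∧ ¬F.Cornersupport T i v}.ncard

/-- `μ_v(c)`: if `v ∈ Uⁱ`, the number of `k ∈ Vⁱ` with `k > v`; if `v ∈ Vⁱ`,
the number of `k ∈ U^{i-1}` with `k < v`.  In both cases the relevant block is the
one immediately preceding the block of `v`. -/
noncomputable def mu {n : ℕ} (F : Ferrers n) (c : Fin (n + 1) → ℕ) (v : Fin (n + 1)) : ℕ :=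
  if v ∈ F.rows then {k | v < k ∧ k ∈ F.canonTop c (F.bIdx c v - 1)}.ncard
  else {k | k < v ∧ k ∈ F.canonTop c (F.bIdx c v - 1)}.ncard

/-- The minimal recurrent configuration with the same canonical toppling as `c`:
if `j ∈ Uⁱ` then `minrec c j = |{ℓ ∈ Vᵏ : j < ℓ, k > i}|`, and if `j ∈ Vⁱ` then
`minrec c j = |{ℓ ∈ Uᵏ : ℓ < j, k ≥ i}|` (blocks `Vᵏ` sit at odd index `2k - 1`,
blocks `Uᵏ` at even index `2k`). -/
noncomputable def minrecFun {n : ℕ} (F : Ferrers n) (c : Fin (n + 1) → ℕ) :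
    Fin (n + 1) → ℕ :=
  fun j =>
    if j = 0 then 0
    else if j ∈ F.rows then
      {l | j < l ∧ ∃ k, F.bIdx c j < 2 * k + 1 ∧ l ∈ F.canonTop c (2 * k + 1)}.ncard
    else
      {l | l < j ∧ ∃ k, F.bIdx c j < 2 * k ∧ l ∈ F.canonTop c (2 * k)}.ncard

/-- The number of edges of `G(F)` (equivalently, the number of cells of `F`). -/
noncomputable def edgeCount {n : ℕ} (F : Ferrers n) : ℕ :=
  {p : Fin (n + 1) × Fin (n + 1) | F.Cell p.1 p.2}.ncard

end Ferrers

namespace Ferrers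

variable {n : ℕ} {F : Ferrers n} {c : Fin (n + 1) → ℕ} {u v w : Fin (n + 1)}

theorem adj_comm : F.Adj u v ↔ F.Adj v u := or_comm

theorem Adj.mem_rows_iff (h : F.Adj u v) : u ∈ F.rows ↔ v ∉ F.rows := by
  rcases h with h | h
  · exact ⟨fun _ => h.2.1, fun _ => h.1⟩
  · exact ⟨fun hu => absurd hu h.2.1, fun hv => absurd h.1 hv⟩

theorem deg_eq : F.deg v = {w | F.Adj w v}.ncard := by
  simp only [deg, adj_comm (u := v)]

/-! ### Toppling along a list -/

theorem toppleList_apply (c : Fin (n + 1) → ℕ) {l : List (Fin (n + 1))} (hl : l.Nodup)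
    (hv : v ≠ 0) (hvl : v ∉ l) :
    F.toppleList c l v = c v + {w | w ∈ l ∧ F.Adj w v}.ncard := by
  induction l generalizing c with
  | nil => simp [toppleList]
  | cons a l ih =>
    rw [List.nodup_cons] at hl
    rw [List.mem_cons, not_or] at hvl
    have hstep : F.toppleList c (a :: l) v = F.toppleList (F.topple c a) l v := rfl
    rw [hstep, ih (F.topple c a) hl.2 hvl.2]
    by_cases ha : F.Adj a v
    · have hset : {w | w ∈ a :: l ∧ F.Adj w v} = insert a {w | w ∈ l ∧ F.Adj w v} := by
        ext w
        simp only [List.mem_cons, Set.mem_ofPred_eq, Set.mem_insert_iff]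
        constructor
        · tauto
        · rintro (rfl | h)
          · exact ⟨Or.inl rfl, ha⟩
          · exact ⟨Or.inr h.1, h.2⟩
      rw [hset, Set.ncard_insert_of_notMem (fun h => hl.1 h.1)]
      simp only [topple, if_neg hv, if_neg hvl.1, if_pos ha]
      omega
    · have hset : {w | w ∈ a :: l ∧ F.Adj w v} = {w | w ∈ l ∧ F.Adj w v} := by
        ext w
        simp only [List.mem_cons, Set.mem_ofPred_eq]
        constructor
        · rintro ⟨rfl | h, h'⟩
          · exact absurd h' ha
          · exact ⟨h, h'⟩
        · tauto
      rw [hset]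
      simp only [topple, if_neg hv, if_neg hvl.1, if_neg ha]

/-- Burning criterion with a rank function in place of an ordering of the vertices. -/
theorem Recurrent.of_rank (h0 : c 0 = 0) (hs : F.Stable c) (r : Fin (n + 1) → ℕ)
    (hr0 : ∀ v, v ≠ 0 → r 0 < r v)
    (hr : ∀ v, v ≠ 0 → F.deg v ≤ c v + {w | F.Adj w v ∧ r w < r v}.ncard) :
    F.Recurrent c := by
  set l := (List.finRange (n + 1)).mergeSort (fun a b => decide (r a ≤ r b))
  have hperm : l.Perm (List.finRange (n + 1)) := List.mergeSort_perm _ _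
  have hlen : l.length = n + 1 := by simp [hperm.length_eq]
  have hnd : l.Nodup := hperm.nodup_iff.2 (List.nodup_finRange _)
  have hmem : ∀ w, w ∈ l := fun w => hperm.mem_iff.2 (List.mem_finRange w)
  have hsort : l.Pairwise (fun a b => r a ≤ r b) := by
    have := List.pairwise_mergeSort (le := fun a b => decide (r a ≤ r b))
      (fun a b c hab hbc => by simp only [decide_eq_true_eq] at *; omega)
      (fun a b => by simp only [Bool.or_eq_true, decide_eq_true_eq]; omega)
      (List.finRange (n + 1))
    simpa using this
  have hbefore : ∀ i j (hi : i < l.length) (hj : j < l.length), r l[i] < r l[j] → i < j := by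
    intro i j hi hj hij
    by_contra hle
    rcases Nat.lt_or_ge j i with hji | hji
    · have := List.pairwise_iff_getElem.1 hsort j i hj hi hji
      omega
    · obtain rfl : i = j := by omega
      exact lt_irrefl _ hij
  have hhead : l[0]'(by omega) = 0 := by
    by_contra hne
    obtain ⟨i, hi, hi0⟩ := List.getElem_of_mem (hmem 0)
    have := hbefore i 0 hi (by omega) (by rw [hi0]; exact hr0 _ hne)
    omega
  refine ⟨h0, hs, l, hlen, hnd, ?_, ?_⟩
  · rw [List.head?_eq_getElem?, List.getElem?_eq_getElem (by omega), hhead]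
  · intro i hi h1
    rw [List.get_eq_getElem]
    have hne : l[i] ≠ 0 := by
      rw [← hhead]
      intro h
      have := (hnd.getElem_inj_iff).1 h
      omega
    have hnot : l[i] ∉ l.take i := by
      intro h
      obtain ⟨j, hj, hji⟩ := List.mem_take_iff_getElem.1 h
      have := (hnd.getElem_inj_iff).1 hji
      omega
    rw [toppleList_apply c (hnd.sublist (List.take_sublist _ _)) hne hnot]
    refine (hr _ hne).trans (Nat.add_le_add_left (Set.ncard_le_ncard ?_ (Set.toFinite _)) _)
    rintro w ⟨hadj, hlt⟩
    obtain ⟨j, hj, rfl⟩ := List.getElem_of_mem (hmem w)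
    refine ⟨List.mem_take_iff_getElem.2 ⟨j, ?_, rfl⟩, hadj⟩
    have := hbefore j i hj hi hlt
    omega

theorem Recurrent.exists_rank (h : F.Recurrent c) :
    ∃ r : Fin (n + 1) → ℕ,
      ∀ v, v ≠ 0 → F.deg v ≤ c v + {w | F.Adj w v ∧ r w < r v}.ncard := by
  obtain ⟨-, -, l, hlen, hnd, hhead, hl⟩ := h
  have hmem : ∀ w, w ∈ l := by
    have huniv : l.toFinset = Finset.univ := by
      rw [← Finset.card_eq_iff_eq_univ, List.toFinset_card_of_nodup hnd, hlen, Fintype.card_fin]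
    intro w
    rw [← List.mem_toFinset, huniv]
    exact Finset.mem_univ w
  refine ⟨fun w => l.idxOf w, fun v hv => ?_⟩
  have hi : l.idxOf v < l.length := List.idxOf_lt_length_iff.2 (hmem v)
  have hget : l[l.idxOf v] = v := List.getElem_idxOf hi
  have hpos : 1 ≤ l.idxOf v := by
    rw [Nat.one_le_iff_ne_zero]
    intro h0
    rw [List.head?_eq_getElem?, ← h0, List.getElem?_eq_getElem hi, hget] at hhead
    exact hv (Option.some.inj hhead)
  have hnot : v ∉ l.take (l.idxOf v) := by
    intro h
    obtain ⟨j, hj, hji⟩ := List.mem_take_iff_getElem.1 h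
    have hji' : l[j] = l[l.idxOf v] := hji.trans hget.symm
    have := (hnd.getElem_inj_iff).1 hji'
    omega
  have key := hl _ hi hpos
  rw [List.get_eq_getElem, hget,
    toppleList_apply c (hnd.sublist (List.take_sublist _ _)) hv hnot] at key
  refine key.trans (Nat.add_le_add_left (Set.ncard_le_ncard ?_ (Set.toFinite _)) _)
  rintro w ⟨hw, hadj⟩
  refine ⟨hadj, ?_⟩
  obtain ⟨j, hj, rfl⟩ := List.mem_take_iff_getElem.1 hw
  change l.idxOf l[j] < l.idxOf v
  rw [hnd.idxOf_getElem]
  omega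

/-! ### The canonical toppling -/

/-- The vertices toppled before the `k`-th block of the canonical toppling. -/
def toppledBefore (F : Ferrers n) (c : Fin (n + 1) → ℕ) (k : ℕ) : Set (Fin (n + 1)) :=
  {w | ∃ m < k, w ∈ F.canonTop c m}

theorem toppledBefore_succ (k : ℕ) :
    F.toppledBefore c (k + 1) = F.toppledBefore c k ∪ F.canonTop c k := by
  ext w
  simp only [toppledBefore, Set.mem_ofPred_eq, Set.mem_union, Nat.lt_succ_iff_lt_or_eq]
  constructor
  · rintro ⟨m, hm | rfl, h⟩
    · exact Or.inl ⟨m, hm, h⟩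
    · exact Or.inr h
  · rintro (⟨m, hm, h⟩ | h)
    · exact ⟨m, Or.inl hm, h⟩
    · exact ⟨k, Or.inr rfl, h⟩

theorem deg_le_of_mem_canonTop {k : ℕ} (hv : v ≠ 0) (h : v ∈ F.canonTop c k) :
    F.deg v ≤ F.canonConfig c k v := by
  cases k with
  | zero => exact absurd h hv
  | succ k => exact h.2.2

theorem ncard_adj_le_deg (S : Set (Fin (n + 1))) : {w | w ∈ S ∧ F.Adj w v}.ncard ≤ F.deg v := by
  rw [deg_eq]
  exact Set.ncard_le_ncard (fun w hw => hw.2) (Set.toFinite _)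

theorem canonConfig_apply (hs : F.Stable c) (k : ℕ) :
    (∀ v, v ≠ 0 → F.canonConfig c k v + (if v ∈ F.toppledBefore c k then F.deg v else 0) =
      c v + {w | w ∈ F.toppledBefore c k ∧ F.Adj w v}.ncard) ∧
    ∀ v ∈ F.canonTop c k, v ∉ F.toppledBefore c k := by
  induction k with
  | zero => simp [toppledBefore, canonConfig, canonAux]
  | succ k ih =>
    obtain ⟨ih, hdisj⟩ := ih
    have hconf : ∀ v, v ≠ 0 → F.canonConfig c (k + 1) v +
        (if v ∈ F.toppledBefore c (k + 1) then F.deg v else 0) =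
        c v + {w | w ∈ F.toppledBefore c (k + 1) ∧ F.Adj w v}.ncard := by
      intro v hv
      have hstep : F.canonConfig c (k + 1) v =
          F.canonConfig c k v + {w | w ∈ F.canonTop c k ∧ F.Adj w v}.ncard -
            if v ∈ F.canonTop c k then F.deg v else 0 := by
        change F.toppleSet (F.canonConfig c k) (F.canonTop c k) v = _
        simp only [toppleSet, if_neg hv]
      have hset : {w | w ∈ F.toppledBefore c (k + 1) ∧ F.Adj w v} =
          {w | w ∈ F.toppledBefore c k ∧ F.Adj w v} ∪ {w | w ∈ F.canonTop c k ∧ F.Adj w v} := by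
        ext w
        simp only [toppledBefore_succ, Set.mem_union, Set.mem_ofPred_eq, or_and_right]
      have hd : Disjoint {w | w ∈ F.toppledBefore c k ∧ F.Adj w v}
          {w | w ∈ F.canonTop c k ∧ F.Adj w v} :=
        Set.disjoint_left.2 fun w h h' => hdisj w h'.1 h.1
      rw [hstep, hset, Set.ncard_union_eq hd (Set.toFinite _) (Set.toFinite _)]
      have := ih v hv
      have hmem : v ∈ F.toppledBefore c (k + 1) ↔
          v ∈ F.toppledBefore c k ∨ v ∈ F.canonTop c k := by
        rw [toppledBefore_succ, Set.mem_union]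
      by_cases h1 : v ∈ F.canonTop c k
      · have h2 := hdisj v h1
        have h3 := deg_le_of_mem_canonTop hv h1
        simp only [hmem, h1, h2, or_true, if_true, if_false] at this ⊢
        omega
      · simp only [hmem, h1, or_false, if_false] at this ⊢
        omega
    refine ⟨hconf, fun v hv hmem => ?_⟩
    have h1 := hconf v hv.1
    rw [if_pos hmem] at h1
    have h2 := hs v hv.1
    have h3 := ncard_adj_le_deg (F := F) (v := v) (F.toppledBefore c (k + 1))
    have h4 := deg_le_of_mem_canonTop hv.1 hv
    omega

theorem Recurrent.exists_mem_canonTop (h : F.Recurrent c) (v : Fin (n + 1)) :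
    ∃ k, v ∈ F.canonTop c k := by
  obtain ⟨r, hr⟩ := h.exists_rank
  induction hm : r v using Nat.strong_induction_on generalizing v with
  | _ m ih =>
  by_cases hv : v = 0
  · exact ⟨0, hv⟩
  have hpre : ∀ w, ∃ k, r w < r v → w ∈ F.canonTop c k := fun w => by
    by_cases hw : r w < r v
    · obtain ⟨k, hk⟩ := ih (r w) (hm ▸ hw) w rfl
      exact ⟨k, fun _ => hk⟩
    · exact ⟨0, fun hw' => absurd hw' hw⟩
  choose f hf using hpre
  set K := ∑ w, f w
  have hfK : ∀ w, f w ≤ K := fun w => Finset.single_le_sum (fun _ _ => Nat.zero_le _)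
    (Finset.mem_univ w)
  obtain ⟨k, hkK, hpar⟩ : ∃ k, K ≤ k ∧ (if k % 2 = 0 then v ∉ F.rows else v ∈ F.rows) := by
    by_cases hrow : v ∈ F.rows
    · refine ⟨2 * K + 1, by omega, ?_⟩
      rw [if_neg (by omega)]
      exact hrow
    · refine ⟨2 * K, by omega, ?_⟩
      rw [if_pos (by omega)]
      exact hrow
  by_cases hD : v ∈ F.toppledBefore c (k + 1)
  · obtain ⟨m, -, hm⟩ := hD
    exact ⟨m, hm⟩
  · refine ⟨k + 1, hv, hpar, ?_⟩
    change F.deg v ≤ F.canonConfig c (k + 1) v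
    have h1 := (canonConfig_apply h.2.1 (k + 1)).1 v hv
    rw [if_neg hD, Nat.add_zero] at h1
    rw [h1]
    refine (hr v hv).trans (Nat.add_le_add_left (Set.ncard_le_ncard ?_ (Set.toFinite _)) _)
    rintro w ⟨hadj, hw⟩
    exact ⟨⟨f w, Nat.lt_succ_of_le ((hfK w).trans hkK), hf w hw⟩, hadj⟩

theorem Recurrent.mem_canonTop_bIdx (h : F.Recurrent c) (v : Fin (n + 1)) :
    v ∈ F.canonTop c (F.bIdx c v) := Nat.sInf_mem (h.exists_mem_canonTop v)

theorem Recurrent.mem_toppledBefore_iff (h : F.Recurrent c) {k : ℕ} :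
    v ∈ F.toppledBefore c k ↔ F.bIdx c v < k :=
  ⟨fun ⟨_, hm, hv⟩ => (Nat.sInf_le hv).trans_lt hm, fun hk => ⟨_, hk, h.mem_canonTop_bIdx v⟩⟩

theorem bIdx_zero : F.bIdx c 0 = 0 :=
  Nat.le_zero.1 (Nat.sInf_le (show (0 : Fin (n + 1)) ∈ F.canonTop c 0 from rfl))

theorem Recurrent.bIdx_pos (h : F.Recurrent c) (hv : v ≠ 0) : 0 < F.bIdx c v := by
  rw [Nat.pos_iff_ne_zero]
  intro h0
  have := h.mem_canonTop_bIdx v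
  rw [h0] at this
  exact hv this

theorem Recurrent.mem_rows_iff (h : F.Recurrent c) (v : Fin (n + 1)) :
    v ∈ F.rows ↔ F.bIdx c v % 2 = 0 := by
  have hv := h.mem_canonTop_bIdx v
  cases hb : F.bIdx c v with
  | zero =>
    rw [hb] at hv
    obtain rfl : v = 0 := hv
    simp [F.zero_mem]
  | succ k =>
    rw [hb] at hv
    have hpar := hv.2.1
    split_ifs at hpar with hk
    · exact iff_of_false hpar (by omega)
    · exact iff_of_true hpar (by omega)

theorem Recurrent.bIdx_ne (h : F.Recurrent c) (huv : F.Adj u v) : F.bIdx c u ≠ F.bIdx c v := by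
  intro heq
  have h1 := huv.mem_rows_iff
  rw [h.mem_rows_iff u, h.mem_rows_iff v, heq] at h1
  tauto

theorem Recurrent.deg_le (h : F.Recurrent c) (hv : v ≠ 0) :
    F.deg v ≤ c v + {w | F.Adj w v ∧ F.bIdx c w < F.bIdx c v}.ncard := by
  have hmem := h.mem_canonTop_bIdx v
  have h1 := (canonConfig_apply h.2.1 (F.bIdx c v)).1 v hv
  rw [if_neg ((canonConfig_apply h.2.1 _).2 v hmem), Nat.add_zero] at h1
  have h2 := deg_le_of_mem_canonTop hv hmem
  simp only [h.mem_toppledBefore_iff, and_comm (b := F.Adj _ _)] at h1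
  omega

/-! ### Orientations -/

/-- `R` orients every edge of `G(F)`, and `0` is a source. -/
structure IsOrientation (F : Ferrers n) (R : Fin (n + 1) → Fin (n + 1) → Prop) : Prop where
  adj : ∀ {u v}, R u v → F.Adj u v
  asymm : ∀ {u v}, R u v → ¬R v u
  total : ∀ {u v}, F.Adj u v → R u v ∨ R v u
  source : ∀ {u}, ¬R u 0

variable {R : Fin (n + 1) → Fin (n + 1) → Prop}

theorem IsOrientation.deg_eq (hR : F.IsOrientation R) (v : Fin (n + 1)) :
    F.deg v = {w | R v w}.ncard + {w | R w v}.ncard := by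
  have hd : Disjoint {w | R v w} {w | R w v} :=
    Set.disjoint_left.2 fun w h h' => hR.asymm h h'
  rw [← Set.ncard_union_eq hd (Set.toFinite _) (Set.toFinite _), deg]
  congr 1
  ext w
  exact ⟨hR.total, fun h => h.elim hR.adj fun h => adj_comm.1 (hR.adj h)⟩

theorem IsOrientation.sum_out_add_deg_zero (hR : F.IsOrientation R) :
    2 * ((∑ v, if v = 0 then 0 else {w | R v w}.ncard) + F.deg 0) = ∑ v, F.deg v := by
  have hcard : ∀ p : Fin (n + 1) → Prop, {w | p w}.ncard = ∑ w, if p w then 1 else 0 := by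
    intro p
    rw [Set.ncard_eq_toFinset_card']
    simp
  have hsymm : ∑ v, {w | R w v}.ncard = ∑ v, {w | R v w}.ncard := by
    simp only [hcard]
    exact Finset.sum_comm
  have hout : (∑ v, if v = 0 then 0 else {w | R v w}.ncard) + F.deg 0 =
      ∑ v, {w | R v w}.ncard := by
    have h0 : F.deg 0 = {w | R 0 w}.ncard := by
      rw [hR.deg_eq]
      simp [hR.source]
    rw [h0, ← Finset.add_sum_erase _ _ (Finset.mem_univ (0 : Fin (n + 1))),
      ← Finset.add_sum_erase Finset.univ (fun v => {w | R v w}.ncard)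
        (Finset.mem_univ (0 : Fin (n + 1))), if_pos rfl, zero_add, add_comm]
    congr 1
    exact Finset.sum_congr rfl fun v hv => if_neg (Finset.ne_of_mem_erase hv)
  rw [hout, Finset.sum_congr rfl fun v _ => hR.deg_eq v, Finset.sum_add_distrib, hsymm, two_mul]

/-- The orientation of `G(F)` from earlier to later blocks of the canonical toppling. -/
def burnRel (F : Ferrers n) (c : Fin (n + 1) → ℕ) (u v : Fin (n + 1)) : Prop :=
  F.Adj u v ∧ F.bIdx c u < F.bIdx c v

theorem Recurrent.isOrientation_burnRel (h : F.Recurrent c) : F.IsOrientation (F.burnRel c) where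
  adj h := h.1
  asymm h h' := lt_asymm h.2 h'.2
  total huv := (lt_or_gt_of_ne (h.bIdx_ne huv)).imp (⟨huv, ·⟩) (⟨adj_comm.1 huv, ·⟩)
  source h := by
    have := h.2
    rw [bIdx_zero] at this
    omega

theorem Recurrent.out_le (h : F.Recurrent c) (hv : v ≠ 0) : {w | F.burnRel c v w}.ncard ≤ c v := by
  have h1 : F.deg v ≤ c v + {w | F.burnRel c w v}.ncard := h.deg_le hv
  have h2 := h.isOrientation_burnRel.deg_eq v
  omega

/-- A minimal recurrent configuration records the outdegrees of its burning orientation. -/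
theorem RecMin.eq_out (h : F.RecMin c) (hv : v ≠ 0) : c v = {w | F.burnRel c v w}.ncard := by
  set c' : Fin (n + 1) → ℕ := fun v => if v = 0 then 0 else {w | F.burnRel c v w}.ncard with hc'
  have hle : ∀ v, c' v ≤ c v := fun v => by
    by_cases hv : v = 0
    · simp [hc', hv]
    · simpa [hc', hv] using h.1.out_le hv
  have hrec : F.Recurrent c' := by
    refine Recurrent.of_rank (by simp [hc']) (fun v hv => (hle v).trans_lt (h.1.2.1 v hv))
      (F.bIdx c) (fun v hv => ?_) (fun v hv => ?_)
    · rw [bIdx_zero]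
      exact h.1.bIdx_pos hv
    · have := h.1.isOrientation_burnRel.deg_eq v
      simp only [hc', if_neg hv]
      exact this.le
  have hsum : ∑ v, c' v = ∑ v, c v :=
    le_antisymm (Finset.sum_le_sum fun v _ => hle v) (h.2 c' hrec)
  have := (Finset.sum_eq_sum_iff_of_le fun v _ => hle v).1 hsum v (Finset.mem_univ v)
  simpa [hc', hv] using this.symm

/-! ### Tableaux as orientations -/

variable {T : Fin (n + 1) → Fin (n + 1) → Bool}

/-- The orientation of `G(F)` given by a tableau: `1`s point from rows to columns and `0`s from
columns to rows. -/
def tabRel (F : Ferrers n) (T : Fin (n + 1) → Fin (n + 1) → Bool) (u v : Fin (n + 1)) : Prop :=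
  F.Cell u v ∧ T u v = true ∨ F.Cell v u ∧ T v u = false

theorem phiTC_eq_out (hv : v ≠ 0) : F.phiTC T v = {w | F.tabRel T v w}.ncard := by
  simp only [phiTC, if_neg hv, tabRel]
  split_ifs with hrow
  · have : ∀ w, ¬F.Cell w v := fun w h => h.2.1 hrow
    simp [this]
  · have : ∀ w, ¬F.Cell v w := fun w h => hrow h.1
    simp [this]

theorem tabRel_phiCT (h : F.Recurrent c) : F.tabRel (F.phiCT c) = F.burnRel c := by
  funext u v
  simp only [tabRel, burnRel, phiCT, eq_iff_iff, Adj]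
  by_cases h1 : F.Cell u v
  · have h2 : ¬F.Cell v u := fun h2 => h1.2.1 h2.1
    simp [h1, h2]
  · by_cases h2 : F.Cell v u
    · have := h.bIdx_ne (Or.inl h2)
      simp only [h1, h2, false_and, true_and, false_or]
      split_ifs <;> simp <;> omega
    · simp [h1, h2]

theorem cell_zero (hj : v ∉ F.rows) : F.Cell 0 v :=
  ⟨F.zero_mem, hj, Fin.pos_of_ne_zero fun h => hj (h ▸ F.zero_mem)⟩

theorem IsEW.isOrientation_tabRel (hT : F.IsEW T) : F.IsOrientation (F.tabRel T) where
  adj h := h.imp And.left And.left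
  asymm := by
    rintro u v (⟨h, hT⟩ | ⟨h, hT⟩) (⟨h', hT'⟩ | ⟨h', hT'⟩)
    · exact h.2.1 h'.1
    · simp_all
    · simp_all
    · exact h.2.1 h'.1
  total := by
    rintro u v (h | h)
    · cases hb : T u v
      · exact Or.inr (Or.inr ⟨h, hb⟩)
      · exact Or.inl (Or.inl ⟨h, hb⟩)
    · cases hb : T v u
      · exact Or.inl (Or.inr ⟨h, hb⟩)
      · exact Or.inr (Or.inl ⟨h, hb⟩)
  source := by
    rintro u (⟨h, -⟩ | ⟨h, hf⟩)
    · exact h.2.1 F.zero_mem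
    · rw [hT.2.1 u h] at hf
      exact Bool.noConfusion hf

theorem IsEW.exists_tabRel (hT : F.IsEW T) (hv : v ≠ 0) : ∃ u, F.tabRel T u v := by
  by_cases hrow : v ∈ F.rows
  · obtain ⟨j, hj⟩ := hT.2.2.1 v hrow hv
    exact ⟨j, Or.inr hj⟩
  · exact ⟨0, Or.inl ⟨cell_zero hrow, hT.2.1 v (cell_zero hrow)⟩⟩

/-- The vertex with smallest label in a set closed under taking some predecessor is a row meeting
every column of the set; since there are no directed 4-cycles, the columns pointing to it, and the
rows pointing to those columns, form a smaller such set. -/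
theorem IsEW.eq_empty_of_forall_exists_tabRel (hT : F.IsEW T) (S : Finset (Fin (n + 1)))
    (hS : ∀ v ∈ S, ∃ u ∈ S, F.tabRel T u v) : S = ∅ := by
  induction S using Finset.strongInduction with
  | _ S ih =>
  by_contra hne
  have hSne : S.Nonempty := Finset.nonempty_iff_ne_empty.2 hne
  set a := S.min' hSne
  have haS : a ∈ S := S.min'_mem hSne
  have hmin : ∀ v ∈ S, a ≤ v := fun v hv => S.min'_le v hv
  obtain ⟨b, hbS, hab | ⟨hab, hTab⟩⟩ := hS a haS
  · exact absurd (hmin b hbS) (not_le.2 hab.1.2.2)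
  have hcell : ∀ i j, i ∈ S → F.Cell i j → F.Cell a j := fun i j hi hij =>
    ⟨hab.1, hij.2.1, (hmin i hi).trans_lt hij.2.2⟩
  let B : Fin (n + 1) → Prop := fun j => j ∈ S ∧ F.Cell a j ∧ T a j = false
  let P : Fin (n + 1) → Prop := fun i => i ∈ S ∧ ∃ j, B j ∧ F.Cell i j ∧ T i j = true
  have haB : ¬B a := fun h => lt_irrefl _ h.2.1.2.2
  have haP : ¬P a := by
    rintro ⟨-, j, hj, -, hT'⟩
    rw [hj.2.2] at hT'
    exact Bool.noConfusion hT'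
  have hsub : S.filter (fun v => B v ∨ P v) ⊂ S := by
    refine Finset.filter_ssubset.2 ⟨a, haS, ?_⟩
    rintro (h | h)
    exacts [haB h, haP h]
  have hempty := ih _ hsub ?_
  · have : b ∈ S.filter (fun v => B v ∨ P v) :=
      Finset.mem_filter.2 ⟨hbS, Or.inl ⟨hbS, hab, hTab⟩⟩
    rw [hempty] at this
    exact Finset.notMem_empty _ this
  · intro v hv
    obtain ⟨hvS, hB | hP⟩ := Finset.mem_filter.1 hv
    · obtain ⟨i, hiS, hi | hi⟩ := hS v hvS
      · exact ⟨i, Finset.mem_filter.2 ⟨hiS, Or.inr ⟨hiS, v, hB, hi⟩⟩, Or.inl hi⟩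
      · exact absurd hi.1.1 hB.2.1.2.1
    · obtain ⟨-, j, hj, hvj, hTvj⟩ := hP
      obtain ⟨k, hkS, hk | ⟨hvk, hTvk⟩⟩ := hS v hvS
      · exact absurd hvj.1 hk.1.2.1
      · refine ⟨k, Finset.mem_filter.2 ⟨hkS, Or.inl ⟨hkS, hcell v k hvS hvk, ?_⟩⟩,
          Or.inr ⟨hvk, hTvk⟩⟩
        by_contra hTak
        rw [Bool.not_eq_false] at hTak
        have := hT.2.2.2 a v k j (hcell v k hvS hvk) hj.2.1 hvk hvj (by rw [hTak, hTvj])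
          (by rw [hj.2.2, hTvk])
        rw [hTak, hj.2.2] at this
        exact Bool.noConfusion this

theorem IsEW.wellFounded_tabRel (hT : F.IsEW T) : WellFounded (F.tabRel T) := by
  rw [WellFounded.wellFounded_iff_has_min]
  intro S hS
  by_contra! hcon
  have := hT.eq_empty_of_forall_exists_tabRel S.toFinset (fun v hv => by
    simpa using hcon v (by simpa using hv))
  rw [Set.toFinset_eq_empty] at this
  exact hS.ne_empty this

theorem IsEW.recurrent_phiTC (hT : F.IsEW T) : F.Recurrent (F.phiTC T) := by
  have hR := hT.isOrientation_tabRel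
  have hirr : ∀ v, ¬Relation.TransGen (F.tabRel T) v v :=
    fun v => (hT.wellFounded_tabRel.transGen).irrefl.irrefl v
  let r : Fin (n + 1) → ℕ := fun v => {u | Relation.TransGen (F.tabRel T) u v}.ncard
  have hr : ∀ u v, F.tabRel T u v → r u < r v := fun u v huv => by
    refine Set.ncard_lt_ncard ⟨fun w hw => hw.tail huv, fun hsub => hirr u ?_⟩ (Set.toFinite _)
    exact hsub (Relation.TransGen.single huv)
  refine Recurrent.of_rank (by simp [phiTC]) (fun v hv => ?_) r (fun v hv => ?_) (fun v hv => ?_)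
  · obtain ⟨u, hu⟩ := hT.exists_tabRel hv
    rw [phiTC_eq_out hv, hR.deg_eq v]
    exact Nat.lt_add_of_pos_right (Set.ncard_pos (Set.toFinite _) |>.2 ⟨u, hu⟩)
  · obtain ⟨u, hu⟩ := hT.exists_tabRel hv
    have h0 : r 0 = 0 := by
      have : {u | Relation.TransGen (F.tabRel T) u 0} = ∅ := by
        refine Set.eq_empty_of_forall_notMem fun u hu => ?_
        obtain ⟨w, -, hw⟩ := Relation.TransGen.tail'_iff.1 hu
        exact hR.source hw
      simp only [r, this, Set.ncard_empty]
    have := hr u v hu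
    omega
  · rw [phiTC_eq_out hv, hR.deg_eq v]
    refine Nat.add_le_add_left (Set.ncard_le_ncard ?_ (Set.toFinite _)) _
    exact fun w hw => ⟨hR.adj hw, hr w v hw⟩

theorem IsEW.recMin_phiTC (hT : F.IsEW T) : F.RecMin (F.phiTC T) := by
  refine ⟨hT.recurrent_phiTC, fun c' hc' => ?_⟩
  have h1 := hT.isOrientation_tabRel.sum_out_add_deg_zero
  have h2 := hc'.isOrientation_burnRel.sum_out_add_deg_zero
  have h3 : ∑ v, F.phiTC T v = ∑ v, if v = 0 then 0 else {w | F.tabRel T v w}.ncard := by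
    refine Finset.sum_congr rfl fun v _ => ?_
    split_ifs with hv
    · simp [phiTC, hv]
    · exact phiTC_eq_out hv
  have h4 : (∑ v, if v = 0 then 0 else {w | F.burnRel c' v w}.ncard) ≤ ∑ v, c' v := by
    refine Finset.sum_le_sum fun v _ => ?_
    split_ifs with hv
    · exact Nat.zero_le _
    · exact hc'.out_le hv
  omega

/-- The burning orientation of `φ_TC T` is the orientation given by `T`. -/
theorem IsEW.burnRel_phiTC (hT : F.IsEW T) (v : Fin (n + 1)) :
    {w | F.burnRel (F.phiTC T) w v} = {w | F.tabRel T w v} := by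
  have hR := hT.isOrientation_tabRel
  have hB := hT.recurrent_phiTC.isOrientation_burnRel
  induction hm : F.bIdx (F.phiTC T) v using Nat.strong_induction_on generalizing v with
  | _ m ih =>
  by_cases hv : v = 0
  · subst hv
    simp [hR.source, hB.source]
  refine Set.eq_of_subset_of_ncard_le (fun w hw => ?_) ?_ (Set.toFinite _)
  · refine (hR.total hw.1).resolve_right fun h => ?_
    have hvw : v ∈ {u | F.burnRel (F.phiTC T) u w} := by
      rw [ih _ (hm ▸ hw.2) w rfl]
      exact h
    exact hB.asymm hw hvw
  · have h1 := hR.deg_eq v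
    have h2 := hB.deg_eq v
    have h3 := hT.recMin_phiTC.eq_out hv
    rw [phiTC_eq_out hv] at h3
    omega

theorem IsEW.phiCT_phiTC (hT : F.IsEW T) : F.phiCT (F.phiTC T) = T := by
  funext i j
  by_cases hc : F.Cell i j
  · have hji : ¬F.Cell j i := fun h => hc.2.1 h.1
    have h : F.burnRel (F.phiTC T) i j ↔ F.tabRel T i j :=
      Set.ext_iff.1 (hT.burnRel_phiTC j) i
    simp only [burnRel, tabRel, Adj, hc, hji, true_and, false_and, or_false] at h
    simp only [phiCT, hc, true_and, h]
    cases T i j <;> simp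
  · simp [phiCT, hc, hT.1 i j hc]

theorem RecMin.phiTC_phiCT (h : F.RecMin c) : F.phiTC (F.phiCT c) = c := by
  funext v
  by_cases hv : v = 0
  · simp [phiTC, hv, h.1.1]
  · rw [phiTC_eq_out hv, tabRel_phiCT h.1, h.eq_out hv]

theorem RecMin.isEW_phiCT (h : F.RecMin c) : F.IsEW (F.phiCT c) := by
  refine ⟨fun i j hij => by simp [phiCT, hij], fun j hj => ?_, fun i hi hi0 => ?_, ?_⟩
  · have := h.1.bIdx_pos (v := j) (fun h0 => hj.2.1 (h0 ▸ F.zero_mem))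
    simp [phiCT, hj, bIdx_zero, this]
  · have h1 := h.1.2.1 i hi0
    rw [h.eq_out hi0, h.1.isOrientation_burnRel.deg_eq i] at h1
    obtain ⟨j, hj⟩ := (Set.ncard_pos (Set.toFinite _)).1 (Nat.lt_add_right_iff_pos.1 h1)
    have hcell : F.Cell i j := hj.1.resolve_left fun h => h.2.1 hi
    exact ⟨j, hcell, by simp [phiCT, lt_asymm hj.2]⟩
  · intro i i' j j' h1 h2 h3 h4
    have n1 := h.1.bIdx_ne (Or.inl h1)
    have n2 := h.1.bIdx_ne (Or.inl h2)
    have n3 := h.1.bIdx_ne (Or.inl h3)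
    have n4 := h.1.bIdx_ne (Or.inl h4)
    simp only [phiCT, h1, h2, h3, h4, true_and]
    split_ifs <;> simp <;> omega

end Ferrers

/-- For `c ∈ Rec_min(G(F))`, the filling `φ_CT c` (a cell `(i,j)`
gets a `1` iff `i` lies in an earlier block than `j` in `CanonTop c`) is a
EW-tableau, and `φ_CT : Rec_min(G(F)) → EWtab(F)` and `φ_TC : EWtab(F) → Rec_min(G(F))`
are mutually inverse bijections. -/
theorem phiCT_phiTC_mutually_inverse {n : ℕ} (F : Ferrers n) :
    (∀ c : Fin (n + 1) → ℕ, F.RecMin c → F.IsEW (F.phiCT c)) ∧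
    (∀ c : Fin (n + 1) → ℕ, F.RecMin c → F.phiTC (F.phiCT c) = c) ∧
    (∀ T : Fin (n + 1) → Fin (n + 1) → Bool, F.IsEW T →
      F.RecMin (F.phiTC T) ∧ F.phiCT (F.phiTC T) = T) := by
  exact ⟨fun _ h => h.isEW_phiCT, fun _ h => h.phiTC_phiCT,
    fun _ hT => ⟨hT.recMin_phiTC, hT.phiCT_phiTC⟩⟩
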